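/- Let K be a field and let A be a reduced finitely generated commutative K-algebra of pure Krull dimension one (i.e., dim A_M = 1 for every maximal ideal M and A has no minimal prime with zero-dimensional quotient) which is not integrally closed in Q(A). Then for every test ideal J for A, n(A, J) = max over P ∈ Sing(A) of n(A_P, P·A_P). In particular, n(A, J) does not depend on the choice of the test ideal J. -/

import Mathlib

set_option synthInstance.maxHeartbeats 1000000
set_option maxHeartbeats 1000000

open scoped nonZeroDivisors

noncomputable section

/-- Given an intermediate ring `B` with `A ⊆ B ⊆ Q(A)` and an ideal `I` of `B`, the
endomorphism ring `End_B(I) = {x ∈ Q(A) : x·I ⊆ I}`, as a subalgebra of `Q(A)`. -/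
def endStep (A : Type*) [CommRing A] (B : Subalgebra A (FractionRing A))
    (I : Ideal B) : Subalgebra A (FractionRing A) where
  carrier := {x : FractionRing A | ∀ j ∈ I,
    x * (j : FractionRing A) ∈ (fun b : B => (b : FractionRing A)) '' I}
  mul_mem' := by
    intro x y hx hy j hj
    obtain ⟨j', hj', heq⟩ := hy j hj
    rw [mul_assoc, ← heq]
    exact hx j' hj'
  one_mem' := by
    intro j hj
    exact ⟨j, hj, (one_mul _).symm⟩
  add_mem' := by
    intro x y hx hy j hj
    obtain ⟨j1, hj1, h1⟩ := hx j hj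
    obtain ⟨j2, hj2, h2⟩ := hy j hj
    refine ⟨j1 + j2, I.add_mem hj1 hj2, ?_⟩
    push_cast
    rw [add_mul, ← h1, ← h2]
  zero_mem' := by
    intro j hj
    exact ⟨0, I.zero_mem, by push_cast; rw [zero_mul]⟩
  algebraMap_mem' := by
    intro a j hj
    refine ⟨algebraMap A B a * j, I.mul_mem_left _ hj, ?_⟩
    push_cast
    rfl

/-- The Grauert–Remmert normalization chain inside `Q(A)`:
`A_0 = A` (the image of `A` in `Q(A)`), and
`A_{i+1} = End_{A_i}(√(J·A_i))`. -/
def chainRing (A : Type*) [CommRing A] (J : Ideal A) :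
    ℕ → Subalgebra A (FractionRing A)
  | 0 => ⊥
  | n + 1 =>
      endStep A (chainRing A J n)
        ((J.map (algebraMap A (chainRing A J n))).radical)

/-- The number of steps of the Grauert–Remmert-type normalization algorithm:
the least `n` with `A_n = A_{n+1}`. -/
def nSteps (A : Type*) [CommRing A] (J : Ideal A) : ℕ :=
  sInf {n | chainRing A J n = chainRing A J (n + 1)}

/-- The conductor of `A` in its integral closure inside `Q(A)`. -/
def conductorIdeal (A : Type*) [CommRing A] : Ideal A where
  carrier := {a : A | ∀ x ∈ integralClosure A (FractionRing A),
      algebraMap A (FractionRing A) a * x ∈ (algebraMap A (FractionRing A)).range}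
  add_mem' := by
    intro a b ha hb x hx
    rw [map_add, add_mul]
    exact add_mem (ha x hx) (hb x hx)
  zero_mem' := by
    intro x hx
    rw [map_zero, zero_mul]
    exact zero_mem _
  smul_mem' := by
    intro c a ha x hx
    obtain ⟨y, hy⟩ := ha x hx
    refine ⟨c * y, ?_⟩
    rw [map_mul, hy, smul_eq_mul, map_mul, mul_assoc]

/-- A test ideal for `A`. -/
def IsTestIdeal (A : Type*) [CommRing A] (J : Ideal A) : Prop :=
  (∃ g ∈ J, g ∈ A⁰) ∧ J.IsRadical ∧
    PrimeSpectrum.zeroLocus (conductorIdeal A : Set A) ⊆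
      PrimeSpectrum.zeroLocus (J : Set A)

/-- A Noetherian local ring is regular if its maximal ideal can be generated by
Krull-dimension-many elements. -/
def IsRegularLocal (R : Type*) [CommRing R] [IsLocalRing R] : Prop :=
  IsNoetherianRing R ∧ ∃ s : Finset R,
    Ideal.span (s : Set R) = IsLocalRing.maximalIdeal R ∧
      (s.card : WithBot ℕ∞) = ringKrullDim R

/-- The singular locus of `A`. -/
def singLocus (A : Type*) [CommRing A] : Set (PrimeSpectrum A) :=
  {P | ¬ IsRegularLocal (Localization.AtPrime P.asIdeal)}

/-!
A test ideal lies in the radical of the conductor, so a power of one of its non-zerodivisors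
multiplies `Ā` into `A`; hence `Ā` is a Noetherian `A`-module and the chain becomes stationary.

Whether `A_{n+1} ⊆ A_n` can be checked locally. Forming the chain commutes with localization
because each `√(J·A_n)` is a finitely generated `A`-module. Let `P ⊇ J` be a prime. In dimension
at most one, `J·A_P = P·A_P`, as `J` is radical and contains a non-zerodivisor; moreover a power
of that non-zerodivisor is divisible by any given non-zerodivisor of `A_P` that is not a unit, so
`Q(A_P)` is the localization of `Q(A)` at `P`. At a prime not containing `J`, and at a regular one,
where `P·A_P` is principal, the chain of `(A_P, P·A_P)` is constant. So the chain of `(A, J)` is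
stationary at `n` exactly when that of `(A_P, P·A_P)` is for every singular `P`.
-/

section RadicalSubmodule

variable {A Q : Type*} [CommRing A] [CommRing Q] [Algebra A Q]

/-- The radical `√(J·B)` of the extension of `J` to an intermediate ring `A ⊆ B ⊆ Q`, as an
`A`-submodule of `Q`, so that it can be localized and divided inside `Q`. -/
def radicalSubmodule (J : Ideal A) (B : Subalgebra A Q) : Submodule A Q :=
  ((J.map (algebraMap A B)).radical.restrictScalars A).map B.val.toLinearMap

theorem coe_mem_smul_toSubmodule_iff {J : Ideal A} {B : Subalgebra A Q} {x : B} :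
    (x : Q) ∈ J • Subalgebra.toSubmodule B ↔ x ∈ J.map (algebraMap A B) := by
  have image_eq : J • Subalgebra.toSubmodule B =
      ((J.map (algebraMap A B)).restrictScalars A).map B.val.toLinearMap := by
    rw [← Ideal.smul_top_eq_map, Submodule.map_smul'', Submodule.map_top]
    congr 1
    ext y
    simp
  rw [image_eq]
  exact ⟨fun ⟨_, hy, hyx⟩ ↦ Subtype.val_injective hyx ▸ hy, fun hx ↦ ⟨x, hx, rfl⟩⟩

-- The exponent `k + 1` makes the condition stable under multiplying `x` by a scalar.
theorem mem_radicalSubmodule_iff {J : Ideal A} {B : Subalgebra A Q} {x : Q} :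
    x ∈ radicalSubmodule J B ↔
      x ∈ B ∧ ∃ k : ℕ, x ^ (k + 1) ∈ J • Subalgebra.toSubmodule B := by
  constructor
  · rintro ⟨y, ⟨k, hk⟩, rfl⟩
    refine ⟨y.2, k, ?_⟩
    exact coe_mem_smul_toSubmodule_iff.2 (pow_succ y k ▸ Ideal.mul_mem_right y _ hk)
  · rintro ⟨hx, k, hk⟩
    exact ⟨⟨x, hx⟩, ⟨k + 1, coe_mem_smul_toSubmodule_iff.1 hk⟩, rfl⟩

theorem radicalSubmodule_le (J : Ideal A) (B : Subalgebra A Q) :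
    radicalSubmodule J B ≤ Subalgebra.toSubmodule B :=
  fun _ hx ↦ (mem_radicalSubmodule_iff.1 hx).1

theorem radicalSubmodule_bot [FaithfulSMul A Q] {J : Ideal A} (hJ : J.IsRadical) :
    radicalSubmodule J (⊥ : Subalgebra A Q) = Submodule.map (Algebra.linearMap A Q) J := by
  have smul_bot : J • Subalgebra.toSubmodule (⊥ : Subalgebra A Q) =
      Submodule.map (Algebra.linearMap A Q) J := by
    rw [Algebra.toSubmodule_bot, Submodule.one_eq_range, ← Submodule.map_top,
      ← Submodule.map_smul'', smul_eq_mul, Ideal.mul_top]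
  ext x
  rw [mem_radicalSubmodule_iff, smul_bot]
  constructor
  · rintro ⟨⟨a, rfl⟩, k, b, hb, hba⟩
    have hab : b = a ^ (k + 1) := FaithfulSMul.algebraMap_injective A Q (by simpa using hba)
    exact ⟨a, hJ ⟨k + 1, hab ▸ hb⟩, rfl⟩
  · rintro ⟨a, ha, rfl⟩
    exact ⟨Subalgebra.algebraMap_mem _ a, 0, a, ha, by simp⟩

end RadicalSubmodule

section Chain

variable {A : Type*} [CommRing A]

theorem toSubmodule_endStep (B : Subalgebra A (FractionRing A)) (I : Ideal B) :
    Subalgebra.toSubmodule (endStep A B I) =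
      (I.restrictScalars A).map B.val.toLinearMap /
        (I.restrictScalars A).map B.val.toLinearMap := by
  ext x
  rw [Submodule.mem_div_iff_forall_mul_mem]
  exact ⟨by rintro hx _ ⟨j, hj, rfl⟩; exact hx j hj, fun hx j hj ↦ hx j ⟨j, hj, rfl⟩⟩

theorem toSubmodule_chainRing_succ (J : Ideal A) (n : ℕ) :
    Subalgebra.toSubmodule (chainRing A J (n + 1)) =
      radicalSubmodule J (chainRing A J n) / radicalSubmodule J (chainRing A J n) :=
  toSubmodule_endStep _ _

theorem le_endStep (B : Subalgebra A (FractionRing A)) (I : Ideal B) : B ≤ endStep A B I :=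
  fun x hx j hj ↦ ⟨⟨x, hx⟩ * j, I.mul_mem_left _ hj, rfl⟩

theorem chainRing_mono (J : Ideal A) : Monotone (chainRing A J) :=
  monotone_nat_of_le_succ fun _ ↦ le_endStep _ _

theorem smul_mem_chainRing_of_mem_succ {J : Ideal A} {g : A} (hg : g ∈ J) {n : ℕ}
    {x : FractionRing A} (hx : x ∈ chainRing A J (n + 1)) : g • x ∈ chainRing A J n := by
  obtain ⟨b, -, hb⟩ := hx (algebraMap A _ g) (Ideal.le_radical (Ideal.mem_map_of_mem _ hg))
  rw [Algebra.smul_def, mul_comm]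
  exact hb ▸ b.2

theorem exists_mem_of_mem_chainRing_one {J : Ideal A} (hJ : J.IsRadical)
    {x : FractionRing A} (hx : x ∈ chainRing A J 1) {t : A} (ht : t ∈ J) :
    ∃ b ∈ J, algebraMap A (FractionRing A) b = t • x := by
  rw [← Subalgebra.mem_toSubmodule, toSubmodule_chainRing_succ, chainRing,
    radicalSubmodule_bot hJ, Submodule.mem_div_iff_forall_mul_mem] at hx
  rw [Algebra.smul_def, mul_comm]
  exact hx _ ⟨t, ht, rfl⟩

end Chain

section Noetherian

variable {A : Type*} [CommRing A]

theorem isNoetherian_of_forall_smul_mem {M : Type*} [AddCommGroup M] [Module A M]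
    {N N' : Submodule A M} (hN' : IsNoetherian A N') {u : A} (hu : IsSMulRegular M u)
    (h : ∀ x ∈ N, u • x ∈ N') : IsNoetherian A N :=
  have := hN'
  isNoetherian_of_injective ((LinearMap.lsmul A M u).restrict h) fun _ _ hxy ↦
    Subtype.ext (hu (congrArg Subtype.val hxy))

theorem isSMulRegular_fractionRing_of_mem_nonZeroDivisors {g : A} (hg : g ∈ A⁰) :
    IsSMulRegular (FractionRing A) g :=
  (isSMulRegular_algebraMap_iff (FractionRing A)).1
    ((IsLocalization.map_units (FractionRing A) ⟨g, hg⟩).isSMulRegular _)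

theorem IsTestIdeal.le_radical_conductorIdeal {J : Ideal A} (hJ : IsTestIdeal A J) :
    J ≤ (conductorIdeal A).radical :=
  (PrimeSpectrum.zeroLocus_subset_zeroLocus_iff _ _).1 hJ.2.2

theorem smul_mem_bot_of_mem_conductorIdeal {c : A} (hc : c ∈ conductorIdeal A)
    {x : FractionRing A} (hx : x ∈ integralClosure A (FractionRing A)) :
    c • x ∈ (⊥ : Subalgebra A (FractionRing A)) := by
  rw [Algebra.smul_def]
  exact hc x hx

variable [IsNoetherianRing A]

theorem isNoetherian_toSubmodule_bot (Q : Type*) [CommRing Q] [Algebra A Q] :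
    IsNoetherian A (Subalgebra.toSubmodule (⊥ : Subalgebra A Q)) := by
  rw [Algebra.toSubmodule_bot, Submodule.one_eq_range]
  exact isNoetherian_range _

theorem isNoetherian_chainRing {J : Ideal A} (hreg : ∃ g ∈ J, g ∈ A⁰) (n : ℕ) :
    IsNoetherian A (Subalgebra.toSubmodule (chainRing A J n)) := by
  obtain ⟨g, hgJ, hg⟩ := hreg
  induction n with
  | zero => exact isNoetherian_toSubmodule_bot _
  | succ n ih =>
    exact isNoetherian_of_forall_smul_mem ih (isSMulRegular_fractionRing_of_mem_nonZeroDivisors hg)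
      fun _ hx ↦ smul_mem_chainRing_of_mem_succ hgJ hx

theorem fg_radicalSubmodule_chainRing {J : Ideal A} (hreg : ∃ g ∈ J, g ∈ A⁰) (n : ℕ) :
    (radicalSubmodule J (chainRing A J n)).FG :=
  isNoetherian_submodule.1 (isNoetherian_chainRing hreg n) _ (radicalSubmodule_le _ _)

theorem chainRing_le_integralClosure {J : Ideal A} (hreg : ∃ g ∈ J, g ∈ A⁰) (n : ℕ) :
    chainRing A J n ≤ integralClosure A (FractionRing A) := fun x hx ↦
  IsIntegral.of_mem_of_fg (chainRing A J n)
    (isNoetherian_submodule.1 (isNoetherian_chainRing hreg n) _ le_rfl) x hx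

theorem IsTestIdeal.isNoetherian_integralClosure {J : Ideal A} (hJ : IsTestIdeal A J) :
    IsNoetherian A (Subalgebra.toSubmodule (integralClosure A (FractionRing A))) := by
  obtain ⟨g, hgJ, hg⟩ := hJ.1
  obtain ⟨k, hk⟩ := hJ.le_radical_conductorIdeal hgJ
  exact isNoetherian_of_forall_smul_mem (isNoetherian_toSubmodule_bot _)
    (isSMulRegular_fractionRing_of_mem_nonZeroDivisors (pow_mem hg k))
    fun _ hx ↦ smul_mem_bot_of_mem_conductorIdeal hk hx

end Noetherian

section Stationary

variable {A : Type*} [CommRing A]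

/-- The chain of `(A, J)` has become constant at its `n`-th ring, that is `A_n = A_{n+1}`. -/
def IsStationaryAt (A : Type*) [CommRing A] (J : Ideal A) (n : ℕ) : Prop :=
  chainRing A J n = chainRing A J (n + 1)

theorem isStationaryAt_iff_le {J : Ideal A} {n : ℕ} :
    IsStationaryAt A J n ↔ chainRing A J (n + 1) ≤ chainRing A J n :=
  ⟨fun h ↦ h.ge, (chainRing_mono J n.le_succ).antisymm⟩

theorem IsStationaryAt.succ {J : Ideal A} {n : ℕ} (h : IsStationaryAt A J n) :
    IsStationaryAt A J (n + 1) :=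
  congrArg (fun B ↦ endStep A B (J.map (algebraMap A B)).radical) h

theorem IsStationaryAt.mono {J : Ideal A} {m n : ℕ} (h : IsStationaryAt A J m) (hmn : m ≤ n) :
    IsStationaryAt A J n :=
  Nat.le_induction h (fun _ _ ↦ IsStationaryAt.succ) n hmn

theorem nSteps_le_iff {J : Ideal A} (h : ∃ n, IsStationaryAt A J n) {n : ℕ} :
    nSteps A J ≤ n ↔ IsStationaryAt A J n :=
  ⟨IsStationaryAt.mono (Nat.sInf_mem h), fun hn ↦ Nat.sInf_le hn⟩

theorem IsTestIdeal.exists_isStationaryAt [IsNoetherianRing A] {J : Ideal A}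
    (hJ : IsTestIdeal A J) : ∃ n, IsStationaryAt A J n := by
  have := hJ.isNoetherian_integralClosure
  let Ā := Subalgebra.toSubmodule (integralClosure A (FractionRing A))
  let chain : ℕ →o Submodule A Ā :=
    ⟨fun n ↦ (Subalgebra.toSubmodule (chainRing A J n)).comap Ā.subtype,
      fun _ _ h ↦ Submodule.comap_mono (chainRing_mono J h)⟩
  obtain ⟨n, hn⟩ := monotone_stabilizes_iff_noetherian.2 this chain
  refine ⟨n, isStationaryAt_iff_le.2 fun x hx ↦ ?_⟩
  have hxĀ : x ∈ Ā := chainRing_le_integralClosure hJ.1 (n + 1) hx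
  have hx_chain : (⟨x, hxĀ⟩ : Ā) ∈ chain (n + 1) := hx
  rwa [← hn (n + 1) n.le_succ] at hx_chain

end Stationary

section LocalizedSubmodule

theorem exists_mem_forall_smul_mem_of_fg {A : Type*} [CommRing A] (S : Submonoid A) {M : Type*}
    [AddCommGroup M] [Module A M] {N N' : Submodule A M} (hN : N.FG)
    (h : ∀ y ∈ N, ∃ s ∈ S, s • y ∈ N') :
    ∃ s ∈ S, ∀ y ∈ N, s • y ∈ N' := by
  obtain ⟨T, rfl⟩ := hN
  choose! s hsS hs using h
  refine ⟨∏ y ∈ T, s y, prod_mem fun y hy ↦ hsS y (Submodule.subset_span hy), fun y hy ↦ ?_⟩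
  suffices Submodule.span A T ≤ N'.comap (LinearMap.lsmul A M (∏ y ∈ T, s y)) from this hy
  refine Submodule.span_le.2 fun y hy ↦ ?_
  obtain ⟨c, hc⟩ := Finset.dvd_prod_of_mem s hy
  rw [SetLike.mem_coe, Submodule.mem_comap, LinearMap.lsmul_apply, hc, mul_comm, mul_smul]
  exact N'.smul_mem c (hs y (Submodule.subset_span hy))

theorem eq_of_forall_apply_mem_iff {A : Type*} [CommRing A] (S : Submonoid A) {A' : Type*}
    [CommRing A'] [Algebra A A'] [IsLocalization S A'] {M M' : Type*} [AddCommGroup M]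
    [Module A M] [AddCommGroup M'] [Module A M'] [Module A' M'] [IsScalarTower A A' M']
    (f : M →ₗ[A] M') [IsLocalizedModule S f] {N N' : Submodule A' M'}
    (h : ∀ x, f x ∈ N ↔ f x ∈ N') : N = N' :=
  (Submodule.localized'gi A' S f).u_injective (Submodule.ext h)

variable {A : Type*} [CommRing A] (S : Submonoid A) (A' : Type*) [CommRing A'] [Algebra A A']
  [IsLocalization S A']

section Module

variable {M M' : Type*} [AddCommGroup M] [Module A M] [AddCommGroup M'] [Module A M']
  [Module A' M'] [IsScalarTower A A' M'] (f : M →ₗ[A] M') [IsLocalizedModule S f]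

theorem apply_mem_localized'_iff {N : Submodule A M} {x : M} :
    f x ∈ N.localized' A' S f ↔ ∃ s ∈ S, s • x ∈ N := by
  constructor
  · rintro ⟨m, hm, s, hs⟩
    rw [IsLocalizedModule.mk'_eq_iff, Submonoid.smul_def, ← map_smul] at hs
    obtain ⟨c, hc⟩ := IsLocalizedModule.exists_of_eq (S := S) hs
    refine ⟨c * s, (c * s).2, ?_⟩
    rw [mul_smul]
    exact hc ▸ N.smul_mem c hm
  · rintro ⟨s, hs, hx⟩
    exact ⟨s • x, hx, ⟨s, hs⟩, IsLocalizedModule.mk'_cancel f x ⟨s, hs⟩⟩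

theorem localized'_le_localized'_iff {N N' : Submodule A M} :
    N.localized' A' S f ≤ N'.localized' A' S f ↔ ∀ x ∈ N, ∃ s ∈ S, s • x ∈ N' := by
  rw [(Submodule.localized'gi A' S f).gc.le_iff_le]
  exact forall₂_congr fun x _ ↦ apply_mem_localized'_iff S A' f

end Module

section Algebra

variable {Q Q' : Type*} [CommRing Q] [Algebra A Q] [CommRing Q'] [Algebra A Q'] [Algebra A' Q']
  [IsScalarTower A A' Q'] (f : Q →ₐ[A] Q') [IsLocalizedModule S f.toLinearMap]

theorem localized'_one :
    (1 : Submodule A Q).localized' A' S f.toLinearMap = (1 : Submodule A' Q') := by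
  simp [Submodule.one_eq_span]

theorem localized'_radicalSubmodule (J : Ideal A) {B : Subalgebra A Q} {B' : Subalgebra A' Q'}
    (hB : (Subalgebra.toSubmodule B).localized' A' S f.toLinearMap = Subalgebra.toSubmodule B') :
    (radicalSubmodule J B).localized' A' S f.toLinearMap =
      radicalSubmodule (J.map (algebraMap A A')) B' := by
  have mem_iff (y : Q) : f y ∈ B' ↔ ∃ s ∈ S, s • y ∈ B := by
    rw [← Subalgebra.mem_toSubmodule, ← hB]
    exact apply_mem_localized'_iff S A' f.toLinearMap
  have mem_smul_iff (y : Q) :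
      f y ∈ J.map (algebraMap A A') • Subalgebra.toSubmodule B' ↔
        ∃ s ∈ S, s • y ∈ J • Subalgebra.toSubmodule B := by
    rw [← hB, ← Ideal.localized'_eq_map A' S, ← Submodule.localized'_smul]
    exact apply_mem_localized'_iff S A' f.toLinearMap
  refine eq_of_forall_apply_mem_iff S f.toLinearMap fun x ↦ ?_
  rw [apply_mem_localized'_iff, AlgHom.toLinearMap_apply]
  simp only [mem_radicalSubmodule_iff, ← map_pow, mem_iff, mem_smul_iff]
  constructor
  · rintro ⟨s, hs, hsx, k, hk⟩
    exact ⟨⟨s, hs, hsx⟩, k, s ^ (k + 1), pow_mem hs _, smul_pow s x (k + 1) ▸ hk⟩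
  · rintro ⟨⟨s, hs, hsx⟩, k, t, ht, hk⟩
    refine ⟨t * s, mul_mem ht hs, mul_smul t s x ▸ B.smul_mem hsx t, k, ?_⟩
    have : ((t * s) • x) ^ (k + 1) = (t ^ k * s ^ (k + 1)) • t • x ^ (k + 1) := by
      rw [smul_pow, smul_smul]; ring_nf
    exact this ▸ Submodule.smul_mem _ _ hk

theorem localized'_div (I : Submodule A Q) {N : Submodule A Q} (hN : N.FG) :
    (I / N).localized' A' S f.toLinearMap =
      I.localized' A' S f.toLinearMap / N.localized' A' S f.toLinearMap := by
  refine eq_of_forall_apply_mem_iff S f.toLinearMap fun x ↦ ?_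
  have mem_div_iff : f x ∈ I.localized' A' S f.toLinearMap / N.localized' A' S f.toLinearMap ↔
      ∀ y ∈ N, ∃ s ∈ S, s • (x * y) ∈ I :=
    calc f x ∈ I.localized' A' S f.toLinearMap / N.localized' A' S f.toLinearMap
      _ ↔ N.localized' A' S f.toLinearMap ≤
            (I.localized' A' S f.toLinearMap).comap (LinearMap.mulLeft A' (f x)) :=
          Submodule.mem_div_iff_forall_mul_mem
      _ ↔ ∀ y ∈ N, f x * f y ∈ I.localized' A' S f.toLinearMap :=
          (Submodule.localized'gi A' S f.toLinearMap).gc.le_iff_le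
      _ ↔ ∀ y ∈ N, ∃ s ∈ S, s • (x * y) ∈ I := forall₂_congr fun y _ ↦ by
          rw [← map_mul]
          exact apply_mem_localized'_iff S A' f.toLinearMap
  rw [apply_mem_localized'_iff, AlgHom.toLinearMap_apply, mem_div_iff]
  simp only [Submodule.mem_div_iff_forall_mul_mem, smul_mul_assoc]
  refine ⟨fun ⟨s, hs, hx⟩ y hy ↦ ⟨s, hs, hx y hy⟩, fun h ↦ ?_⟩
  obtain ⟨s, hs, hsI⟩ := exists_mem_forall_smul_mem_of_fg S (hN.map (LinearMap.mulLeft A x))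
    (N' := I) (by rintro _ ⟨y, hy, rfl⟩; exact h y hy)
  exact ⟨s, hs, fun y hy ↦ hsI _ ⟨y, hy, rfl⟩⟩

end Algebra

end LocalizedSubmodule

section LocalizedChain

variable {A : Type*} [CommRing A] (S : Submonoid A) (A' : Type*) [CommRing A'] [Algebra A A']
  [IsLocalization S A']

theorem localized'_chainRing (f : FractionRing A →ₐ[A] FractionRing A')
    [IsLocalizedModule S f.toLinearMap] {J : Ideal A}
    (hfg : ∀ n, (radicalSubmodule J (chainRing A J n)).FG) (n : ℕ) :
    (Subalgebra.toSubmodule (chainRing A J n)).localized' A' S f.toLinearMap =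
      Subalgebra.toSubmodule (chainRing A' (J.map (algebraMap A A')) n) := by
  induction n with
  | zero => simpa only [chainRing, Algebra.toSubmodule_bot] using localized'_one S A' f
  | succ n ih =>
    rw [toSubmodule_chainRing_succ, toSubmodule_chainRing_succ, localized'_div S A' f _ (hfg n),
      localized'_radicalSubmodule S A' f J ih]

theorem isStationaryAt_map_iff (f : FractionRing A →ₐ[A] FractionRing A')
    [IsLocalizedModule S f.toLinearMap] {J : Ideal A}
    (hfg : ∀ n, (radicalSubmodule J (chainRing A J n)).FG) {n : ℕ} :
    IsStationaryAt A' (J.map (algebraMap A A')) n ↔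
      ∀ x ∈ chainRing A J (n + 1), ∃ s ∈ S, s • x ∈ chainRing A J n := by
  rw [isStationaryAt_iff_le, ← Subalgebra.toSubmodule.le_iff_le, ← localized'_chainRing S A' f hfg,
    ← localized'_chainRing S A' f hfg, localized'_le_localized'_iff]
  rfl

variable {A'} in
theorem isLocalizedModule_fractionRing (f : FractionRing A →ₐ[A] FractionRing A')
    (h : ∀ d ∈ A'⁰, ∃ g ∈ A⁰, d ∣ algebraMap A A' g) : IsLocalizedModule S f.toLinearMap := by
  have f_mk'_mul (a : A) (g : A⁰) : f (IsLocalization.mk' _ a g) *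
      algebraMap A' (FractionRing A') (algebraMap A A' g) =
        algebraMap A' (FractionRing A') (algebraMap A A' a) := by
    simp only [← IsScalarTower.algebraMap_apply, ← f.commutes, ← map_mul, IsLocalization.mk'_spec]
  refine ⟨fun s ↦ ?_, fun y ↦ ?_, fun {x y} hxy ↦ ?_⟩
  · rw [← (Algebra.lmul A (FractionRing A')).commutes]
    exact ((IsLocalization.map_units A' s).map (algebraMap A' (FractionRing A'))).map _
  · obtain ⟨b, ⟨d, hd⟩, rfl⟩ := IsLocalization.exists_mk'_eq A'⁰ y
    obtain ⟨g, hg, c, hc⟩ := h d hd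
    obtain ⟨⟨a, s⟩, has⟩ := IsLocalization.surj S (b * c)
    refine ⟨⟨IsLocalization.mk' _ a ⟨g, hg⟩, s⟩, ?_⟩
    have isUnit_g : IsUnit (algebraMap A' (FractionRing A') (algebraMap A A' g)) :=
      IsLocalization.map_units (FractionRing A')
        ⟨_, IsLocalization.map_nonZeroDivisors_le S A' ⟨g, hg, rfl⟩⟩
    have hbd := IsLocalization.mk'_spec (FractionRing A') b (⟨d, hd⟩ : A'⁰)
    refine isUnit_g.mul_right_cancel ?_
    rw [AlgHom.toLinearMap_apply, f_mk'_mul a ⟨g, hg⟩, ← has, hc, Submonoid.smul_def,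
      Algebra.smul_def, IsScalarTower.algebraMap_apply A A', map_mul, map_mul, map_mul, ← hbd]
    ring
  · obtain ⟨a, g, hag⟩ := IsLocalization.exists_mk'_eq A⁰ (x - y)
    have ha : algebraMap A A' a = 0 := by
      refine IsFractionRing.injective A' (FractionRing A') ?_
      have hfxy : f (x - y) = 0 := (map_sub f x y).trans (sub_eq_zero.2 hxy)
      rw [← f_mk'_mul a g, hag, hfxy, zero_mul, map_zero]
    obtain ⟨s, hs⟩ := (IsLocalization.map_eq_zero_iff S A' a).1 ha
    refine ⟨s, sub_eq_zero.1 ?_⟩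
    rw [← smul_sub, ← hag, Submonoid.smul_def, IsLocalization.smul_mk', hs,
      IsLocalization.mk'_zero]

/-- The canonical map `Q(A) → Q(S⁻¹A)`; it exists because non-zerodivisors stay
non-zerodivisors in a localization. -/
def fractionRingLocalizationMap : FractionRing A →ₐ[A] FractionRing A' :=
  IsLocalization.liftAlgHom (M := A⁰) (f := Algebra.ofId A (FractionRing A')) fun g ↦
    IsLocalization.map_units (FractionRing A')
      ⟨algebraMap A A' g, IsLocalization.map_nonZeroDivisors_le S A' ⟨g, g.2, rfl⟩⟩

end LocalizedChain

section DimensionOne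

theorem krullDimLE_localization_atPrime {A : Type*} [CommRing A] (n : ℕ) [hA : Ring.KrullDimLE n A]
    (P : Ideal A) [P.IsPrime] : Ring.KrullDimLE n (Localization.AtPrime P) := by
  rw [Ring.krullDimLE_iff] at hA ⊢
  rw [IsLocalization.AtPrime.ringKrullDim_eq_height P]
  exact Ideal.height_le_ringKrullDim_of_isPrime.trans hA

theorem krullDimLE_of_forall_isMaximal {A : Type*} [CommRing A] {n : ℕ}
    (h : ∀ M : PrimeSpectrum A, M.asIdeal.IsMaximal →
      ringKrullDim (Localization.AtPrime M.asIdeal) ≤ n) : Ring.KrullDimLE n A := by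
  rw [Ring.krullDimLE_iff, ringKrullDim_le_iff_isMaximal_height_le]
  intro M hM
  rw [← IsLocalization.AtPrime.ringKrullDim_eq_height M (Localization.AtPrime M)]
  exact h ⟨M, hM.isPrime⟩ hM

section Local

variable {R : Type*} [CommRing R] [IsLocalRing R] [Ring.KrullDimLE 1 R]

theorem radical_eq_maximalIdeal {I : Ideal R} (hI : I ≠ ⊤) (hreg : ∃ g ∈ I, g ∈ R⁰) :
    I.radical = IsLocalRing.maximalIdeal R := by
  refine le_antisymm (IsLocalRing.le_maximalIdeal (by rwa [Ne, Ideal.radical_eq_top])) ?_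
  rw [Ideal.radical_eq_sInf]
  refine le_sInf fun p ⟨hIp, hp⟩ ↦ ?_
  obtain ⟨g, hgI, hg⟩ := hreg
  have not_minimal : p ∉ minimalPrimes R := fun hmin ↦
    notMem_nonZeroDivisors_of_mem_mem_minimalPrimes (hIp hgI) hmin hg
  have hmax := (Ring.krullDimLE_one_iff.1 ‹_› p hp).resolve_left not_minimal
  exact (IsLocalRing.eq_maximalIdeal hmax).ge

end Local

theorem algebraMap_atPrime_mem_nonZeroDivisors {A : Type*} [CommRing A]
    (P : Ideal A) [P.IsPrime] {g : A} (hg : g ∈ A⁰) :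
    algebraMap A (Localization.AtPrime P) g ∈ (Localization.AtPrime P)⁰ :=
  IsLocalization.map_nonZeroDivisors_le P.primeCompl _ ⟨g, hg, rfl⟩

variable {A : Type*} [CommRing A] [Ring.KrullDimLE 1 A] (P : Ideal A) [P.IsPrime]

theorem map_atPrime_eq_maximalIdeal {J : Ideal A} (hJ : J.IsRadical) (hreg : ∃ g ∈ J, g ∈ A⁰)
    (hJP : J ≤ P) :
    J.map (algebraMap A (Localization.AtPrime P)) =
      IsLocalRing.maximalIdeal (Localization.AtPrime P) := by
  have := krullDimLE_localization_atPrime 1 P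
  have map_ne_top : J.map (algebraMap A (Localization.AtPrime P)) ≠ ⊤ := by
    refine ne_top_of_le_ne_top (IsLocalRing.maximalIdeal.isMaximal _).ne_top ?_
    rw [← Localization.AtPrime.map_eq_maximalIdeal]
    exact Ideal.map_mono hJP
  obtain ⟨g, hgJ, hg⟩ := hreg
  rw [← radical_eq_maximalIdeal map_ne_top ⟨_, Ideal.mem_map_of_mem _ hgJ,
    algebraMap_atPrime_mem_nonZeroDivisors P hg⟩,
    ← IsLocalization.map_radical P.primeCompl, hJ.radical]

theorem exists_mem_nonZeroDivisors_dvd_algebraMap_atPrime (hreg : ∃ g ∈ P, g ∈ A⁰)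
    {d : Localization.AtPrime P} (hd : d ∈ (Localization.AtPrime P)⁰) :
    ∃ g ∈ A⁰, d ∣ algebraMap A (Localization.AtPrime P) g := by
  have := krullDimLE_localization_atPrime 1 P
  obtain ⟨g, hgP, hg⟩ := hreg
  by_cases hunit : IsUnit d
  · exact ⟨g, hg, hunit.dvd⟩
  have mem_radical : algebraMap A (Localization.AtPrime P) g ∈ (Ideal.span {d}).radical := by
    rw [radical_eq_maximalIdeal (by rwa [Ne, Ideal.span_singleton_eq_top])
      ⟨d, Ideal.mem_span_singleton_self d, hd⟩, ← Localization.AtPrime.map_eq_maximalIdeal]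
    exact Ideal.mem_map_of_mem _ hgP
  obtain ⟨k, hk⟩ := mem_radical
  exact ⟨g ^ k, pow_mem hg k, by rwa [map_pow, ← Ideal.mem_span_singleton]⟩

theorem isStationaryAt_atPrime_iff [IsNoetherianRing A] {J : Ideal A} (hJ : J.IsRadical)
    (hreg : ∃ g ∈ J, g ∈ A⁰) (hJP : J ≤ P) {n : ℕ} :
    IsStationaryAt (Localization.AtPrime P)
        (IsLocalRing.maximalIdeal (Localization.AtPrime P)) n ↔
      ∀ x ∈ chainRing A J (n + 1), ∃ s ∈ P.primeCompl, s • x ∈ chainRing A J n := by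
  let f := fractionRingLocalizationMap P.primeCompl (Localization.AtPrime P)
  have : IsLocalizedModule P.primeCompl f.toLinearMap :=
    isLocalizedModule_fractionRing P.primeCompl f fun d ↦
      exists_mem_nonZeroDivisors_dvd_algebraMap_atPrime P (hreg.imp fun _ ↦ .imp_left (@hJP _))
  rw [← map_atPrime_eq_maximalIdeal P hJ hreg hJP]
  exact isStationaryAt_map_iff P.primeCompl _ f (fg_radicalSubmodule_chainRing hreg)

end DimensionOne

section TotalFractionRing

theorem isStationaryAt_of_isFractionRing_self {R : Type*} [CommRing R] [h : IsFractionRing R R]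
    (J : Ideal R) (n : ℕ) : IsStationaryAt R J n := by
  have eq_top (B : Subalgebra R (FractionRing R)) : B = ⊤ := by
    refine top_le_iff.1 fun x _ ↦ ?_
    obtain ⟨a, rfl⟩ := (IsFractionRing.self_iff_surjective (FractionRing R)).1 h x
    exact B.algebraMap_mem a
  exact (eq_top _).trans (eq_top _).symm

theorem isFractionRing_self_of_forall_notMem {R : Type*} [CommRing R] [IsLocalRing R]
    (h : ∀ d ∈ IsLocalRing.maximalIdeal R, d ∉ R⁰) : IsFractionRing R R :=
  IsFractionRing.self_iff_nonZeroDivisors_le_isUnit.2 fun d hd ↦ by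
    by_contra hunit
    exact h d hunit hd

variable {A : Type*} [CommRing A] [IsNoetherianRing A] (P : Ideal A) [P.IsPrime]

theorem mem_associatedPrimes_of_forall_notMem [Ring.KrullDimLE 1 A] (h : ∀ g ∈ P, g ∉ A⁰) :
    P ∈ associatedPrimes A A := by
  rcases Ring.krullDimLE_one_iff.1 ‹_› P ‹_› with hmin | hmax
  · refine Module.associatedPrimes.minimalPrimes_annihilator_subset_associatedPrimes A A ?_
    rwa [Module.annihilator_eq_bot.2 inferInstance]
  · obtain ⟨𝔮, h𝔮, hP𝔮⟩ :=
      (P.subset_union_prime_finite (associatedPrimes.finite A A) (f := id) ⊥ ⊥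
        fun _ h𝔮 _ _ ↦ h𝔮.isPrime).1 (by
          simp_rw [id, biUnion_associatedPrimes_eq_compl_nonZeroDivisors]
          exact h)
    exact hmax.eq_of_le h𝔮.isPrime.ne_top hP𝔮 ▸ h𝔮

open Module.associatedPrimes in
theorem isFractionRing_self_atPrime_of_mem_associatedPrimes (hP : P ∈ associatedPrimes A A) :
    IsFractionRing (Localization.AtPrime P) (Localization.AtPrime P) := by
  have hm : IsLocalRing.maximalIdeal (Localization.AtPrime P) ∈
      associatedPrimes (Localization.AtPrime P) (Localization.AtPrime P) := by
    apply mem_associatedPrimes_of_comap_mem_associatedPrimes_of_isLocalizedModule P.primeCompl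
      (Algebra.linearMap A (Localization.AtPrime P))
    rwa [← Ideal.under_def, Localization.AtPrime.under_maximalIdeal]
  refine isFractionRing_self_of_forall_notMem fun d hd ↦ ?_
  have := biUnion_associatedPrimes_eq_compl_nonZeroDivisors (Localization.AtPrime P)
  exact this.le (Set.mem_biUnion hm hd)

end TotalFractionRing

section Regular

variable {R : Type*} [CommRing R] [IsLocalRing R]

theorem isStationaryAt_of_isPrincipal_maximalIdeal
    (h : (IsLocalRing.maximalIdeal R).IsPrincipal) (n : ℕ) :
    IsStationaryAt R (IsLocalRing.maximalIdeal R) n := by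
  by_cases hreg : ∃ g ∈ IsLocalRing.maximalIdeal R, g ∈ R⁰
  · obtain ⟨g, hgm, hg⟩ := hreg
    obtain ⟨t, ht⟩ := h
    obtain ⟨r, rfl⟩ := Ideal.mem_span_singleton.1 (ht ▸ hgm)
    have t_mem : t ∈ IsLocalRing.maximalIdeal R := ht ▸ Ideal.mem_span_singleton_self t
    have isSMulRegular_t := isSMulRegular_fractionRing_of_mem_nonZeroDivisors
      (mul_mem_nonZeroDivisors.1 hg).1
    refine IsStationaryAt.mono (isStationaryAt_iff_le.2 fun x hx ↦ ?_) n.zero_le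
    obtain ⟨b, hb, hbx⟩ := exists_mem_of_mem_chainRing_one
      (IsLocalRing.maximalIdeal.isMaximal R).isPrime.isRadical hx t_mem
    obtain ⟨c, rfl⟩ := Ideal.mem_span_singleton.1 (ht ▸ hb)
    have hx_eq : algebraMap R (FractionRing R) c = x := isSMulRegular_t (by
      simpa [Algebra.smul_def] using hbx)
    exact hx_eq ▸ Subalgebra.algebraMap_mem _ c
  · have := isFractionRing_self_of_forall_notMem (R := R) (fun g hgP hg ↦ hreg ⟨g, hgP, hg⟩)
    exact isStationaryAt_of_isFractionRing_self _ n

theorem IsRegularLocal.isPrincipal_maximalIdeal [Ring.KrullDimLE 1 R] (h : IsRegularLocal R) :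
    (IsLocalRing.maximalIdeal R).IsPrincipal := by
  obtain ⟨-, s, hs, hcard⟩ := h
  have card_le_one : s.card ≤ 1 := by
    exact_mod_cast hcard.trans_le (Ring.krullDimLE_iff.1 ‹_›)
  obtain ⟨t, hst⟩ := Finset.card_le_one_iff_subset_singleton.1 card_le_one
  rw [← hs]
  rcases Finset.subset_singleton_iff.1 hst with rfl | rfl
  · rw [Finset.coe_empty, Ideal.span_empty]
    exact bot_isPrincipal
  · rw [Finset.coe_singleton]
    exact ⟨t, rfl⟩

end Regular

section LocalGlobal

variable {A : Type*} [CommRing A]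

theorem le_of_forall_isMaximal_exists_smul_mem {M : Type*} [AddCommGroup M] [Module A M]
    {N N' : Submodule A M}
    (h : ∀ P : Ideal A, P.IsMaximal → ∀ x ∈ N, ∃ s ∉ P, s • x ∈ N') : N ≤ N' := by
  intro x hx
  by_contra hxN'
  have colon_ne_top : N'.colon {x} ≠ ⊤ := by
    rwa [Ne, Ideal.eq_top_iff_one, Submodule.mem_colon_singleton, one_smul]
  obtain ⟨P, hP, hle⟩ := Ideal.exists_le_maximal _ colon_ne_top
  obtain ⟨s, hsP, hs⟩ := h P hP x hx
  exact hsP (hle (Submodule.mem_colon_singleton.2 hs))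

variable [IsNoetherianRing A] [Ring.KrullDimLE 1 A] {J : Ideal A}

theorem isStationaryAt_zero_atPrime_of_not_le (hJ : IsTestIdeal A J) (P : Ideal A) [P.IsPrime]
    (hreg : ∃ g ∈ P, g ∈ A⁰) (hJP : ¬J ≤ P) :
    IsStationaryAt (Localization.AtPrime P)
      (IsLocalRing.maximalIdeal (Localization.AtPrime P)) 0 := by
  have conductor_not_le : ¬conductorIdeal A ≤ P := fun hle ↦ hJP <|
    hJ.le_radical_conductorIdeal.trans (‹P.IsPrime›.isRadical.radical_le_iff.2 hle)
  obtain ⟨c, hc, hcP⟩ := SetLike.not_le_iff_exists.1 conductor_not_le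
  exact (isStationaryAt_atPrime_iff P ‹P.IsPrime›.isRadical hreg le_rfl).2 fun x hx ↦
    ⟨c, hcP, smul_mem_bot_of_mem_conductorIdeal hc (chainRing_le_integralClosure hreg 1 hx)⟩

theorem IsStationaryAt.atPrime {n : ℕ} (h : IsStationaryAt A J n) (hJ : IsTestIdeal A J)
    (P : Ideal A) [P.IsPrime] :
    IsStationaryAt (Localization.AtPrime P)
      (IsLocalRing.maximalIdeal (Localization.AtPrime P)) n := by
  by_cases hJP : J ≤ P
  · exact (isStationaryAt_atPrime_iff P hJ.2.1 hJ.1 hJP).2 fun x hx ↦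
      ⟨1, one_mem _, by rw [one_smul]; exact h.ge hx⟩
  by_cases hreg : ∃ g ∈ P, g ∈ A⁰
  · exact (isStationaryAt_zero_atPrime_of_not_le hJ P hreg hJP).mono n.zero_le
  · have := isFractionRing_self_atPrime_of_mem_associatedPrimes P
      (mem_associatedPrimes_of_forall_notMem P (fun g hgP hg ↦ hreg ⟨g, hgP, hg⟩))
    exact isStationaryAt_of_isFractionRing_self _ n

theorem isStationaryAt_of_forall_mem_singLocus (hJ : J.IsRadical) (hreg : ∃ g ∈ J, g ∈ A⁰) {n : ℕ}
    (h : ∀ P ∈ singLocus A, IsStationaryAt (Localization.AtPrime P.asIdeal)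
      (IsLocalRing.maximalIdeal (Localization.AtPrime P.asIdeal)) n) :
    IsStationaryAt A J n := by
  rw [isStationaryAt_iff_le, ← Subalgebra.toSubmodule.le_iff_le]
  refine le_of_forall_isMaximal_exists_smul_mem fun M hM x hx ↦ ?_
  by_cases hJM : J ≤ M
  · refine (isStationaryAt_atPrime_iff M hJ hreg hJM).1 ?_ x hx
    by_cases hregular : IsRegularLocal (Localization.AtPrime M)
    · have := krullDimLE_localization_atPrime 1 M
      exact isStationaryAt_of_isPrincipal_maximalIdeal hregular.isPrincipal_maximalIdeal n
    · exact h ⟨M, hM.isPrime⟩ hregular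
  · obtain ⟨g, hgJ, hgM⟩ := SetLike.not_le_iff_exists.1 hJM
    exact ⟨g, hgM, smul_mem_chainRing_of_mem_succ hgJ hx⟩

theorem isStationaryAt_iff_forall_mem_singLocus (hJ : IsTestIdeal A J) {n : ℕ} :
    IsStationaryAt A J n ↔ ∀ P ∈ singLocus A, IsStationaryAt (Localization.AtPrime P.asIdeal)
      (IsLocalRing.maximalIdeal (Localization.AtPrime P.asIdeal)) n :=
  ⟨fun h P _ ↦ h.atPrime hJ P.asIdeal, isStationaryAt_of_forall_mem_singLocus hJ.2.1 hJ.1⟩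

end LocalGlobal

theorem nSteps_curve_independent_of_test_ideal_general (A : Type*) [CommRing A]
    [IsNoetherianRing A] [Ring.KrullDimLE 1 A] (J : Ideal A) (hJ : IsTestIdeal A J) :
    nSteps A J = sSup {m : ℕ | ∃ P ∈ singLocus A,
      m = nSteps (Localization.AtPrime P.asIdeal)
            (IsLocalRing.maximalIdeal (Localization.AtPrime P.asIdeal))} := by
  have nSteps_local_le_iff (P : PrimeSpectrum A) (n : ℕ) :=
    nSteps_le_iff (n := n) (hJ.exists_isStationaryAt.imp fun _ h ↦ h.atPrime hJ P.asIdeal)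
  have le_iff (n : ℕ) : nSteps A J ≤ n ↔ ∀ P ∈ singLocus A,
      nSteps (Localization.AtPrime P.asIdeal)
        (IsLocalRing.maximalIdeal (Localization.AtPrime P.asIdeal)) ≤ n := by
    simp only [nSteps_le_iff hJ.exists_isStationaryAt, nSteps_local_le_iff,
      isStationaryAt_iff_forall_mem_singLocus hJ]
  refine eq_of_forall_ge_iff fun n ↦ ?_
  rw [csSup_le_iff', le_iff]
  · constructor
    · rintro h _ ⟨P, hP, rfl⟩
      exact h P hP
    · exact fun h P hP ↦ h _ ⟨P, hP, rfl⟩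
  · refine ⟨nSteps A J, ?_⟩
    rintro _ ⟨P, hP, rfl⟩
    exact (le_iff _).1 le_rfl P hP

/-- Let `K` be a field and `A` a reduced finitely generated
`K`-algebra of pure Krull dimension one which is not integrally closed in `Q(A)`.
Then for every test ideal `J` for `A`,
`n(A, J) = max_{P ∈ Sing(A)} n(A_P, P·A_P)`; in particular `n(A, J)` is independent
of the choice of `J`. -/
theorem nSteps_curve_independent_of_test_ideal
    (K : Type*) [Field K] (A : Type*) [CommRing A] [IsReduced A] [Algebra K A]
    [Algebra.FiniteType K A]
    (hdim : ∀ M : PrimeSpectrum A, M.asIdeal.IsMaximal →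
      ringKrullDim (Localization.AtPrime M.asIdeal) = 1)
    (hmin : ∀ P ∈ minimalPrimes A, ringKrullDim (A ⧸ P) ≠ 0)
    (hnotnormal : integralClosure A (FractionRing A) ≠ ⊥) :
    ∀ J : Ideal A, IsTestIdeal A J →
      nSteps A J = sSup {m : ℕ | ∃ P ∈ singLocus A,
        m = nSteps (Localization.AtPrime P.asIdeal)
              (IsLocalRing.maximalIdeal (Localization.AtPrime P.asIdeal))} := by
  have := Algebra.FiniteType.isNoetherianRing K A
  have : Ring.KrullDimLE 1 A := krullDimLE_of_forall_isMaximal fun M hM ↦ (hdim M hM).le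
  exact nSteps_curve_independent_of_test_ideal_general A
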